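/- Let 0 < κ < 1, w ≠ 0, 0 < β < 1, α > 1, γ ≥ 0, μ > 0 and t > 0. Assume the known Mittag-Leffler facts: 1/(1+Γ(1−β)u) ≤ E_β(−u) ≤ 1/(1+u/Γ(1+β)) for u ≥ 0, and that u ↦ E_β(−u) is nonincreasing on [0,∞) (complete monotonicity). Then lim_{ε→0⁺} ∫_ℝ [E_β(−μ|λ|^α(1+λ²ε^{2β/α})^{γ/2} t^β)]² / E_β(−μ t^β|λ|^α) · f_{κ,w}(λ ε^{β/α}) dλ = f_{κ,w}(0)·∫_ℝ E_β(−μ t^β |λ|^α) dλ. (The dominated-convergence identity (23) at the heart of the proof of Theorem 4 for the fractional Riesz-Bessel equation.) -/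

import Mathlib

open Real MeasureTheory Filter

noncomputable def c1 (k : ℝ) : ℝ := (2:ℝ) ^ ((1 - k)/2) / (Real.sqrt π * Real.Gamma (k/2))

noncomputable def c2 (k : ℝ) : ℝ := 1 / (2 * Real.Gamma k * Real.cos (k * π / 2))

/-- Modified Bessel function of the second kind:
`K ν z = (1/2) ∫₀^∞ s^(ν−1) exp(−(z/2)(s + 1/s)) ds`. -/
noncomputable def besselK (ν z : ℝ) : ℝ :=
  (1/2) * ∫ s in Set.Ioi (0:ℝ), s ^ (ν - 1) * Real.exp (-(z/2) * (s + 1/s))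

/-- The spectral density `f_{κ,w}` of the covariance `cos(wx)/(1+x²)^{κ/2}`. -/
noncomputable def specDen (k w lam : ℝ) : ℝ :=
  (c1 k / 2) * (besselK ((k-1)/2) |lam + w| * |lam + w| ^ ((k-1)/2)
    + besselK ((k-1)/2) |lam - w| * |lam - w| ^ ((k-1)/2))

/-- The Mittag-Leffler function `E_β(z) = Σ_{k≥0} z^k / Γ(βk+1)` (real argument). -/
noncomputable def mittagLeffler (b z : ℝ) : ℝ := ∑' k : ℕ, z ^ k / Real.Gamma (b * k + 1)

/-!
Multiplying the Bessel function by the power of its argument turns `f_{κ,w}` into a sum of two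
translates of a mixture of centred Gaussians, so `f_{κ,w}` is integrable (Tonelli) and continuous
off `±w` (dominated convergence). Since `u ↦ E_β(-u)` decreases, the quotient `E_β² / E_β` in the
integrand is at most its limit `E_β(-μt^β|λ|^α) ≤ 1/(1 + C|λ|^α)`. The factor
`f_{κ,w}(λε^{β/α})` may be unbounded near `λε^{β/α} = ±w`; it is replaced by its value at `0` by a
peak function argument: the rescaled dominating kernels concentrate at the origin, where `f_{κ,w}`
is continuous. Pointwise convergence of the quotient requires continuity of `E_β`, which a monotone
function has off a countable set.
-/

open Set Module Bornology
open scoped Topology NNReal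

section Matern

/-- The Matérn function `|z|^ν K_ν(|z|)`, for `z ≠ 0`, written as a mixture of centred
Gaussians in `z`. -/
noncomputable def matern (ν z : ℝ) : ℝ :=
  (1 / 2) * ∫ r in Ioi (0 : ℝ), r ^ (ν - 1) * exp (-(r / 2) - z ^ 2 / (2 * r))

theorem matern_abs (ν z : ℝ) : matern ν |z| = matern ν z := by
  simp only [matern, sq_abs]

theorem besselK_mul_rpow (ν : ℝ) {z : ℝ} (hz : 0 < z) : besselK ν z * z ^ ν = matern ν z := by
  have hsubst := integral_comp_mul_left_Ioi'
    (fun r : ℝ ↦ r ^ (ν - 1) * exp (-(r / 2) - z ^ 2 / (2 * r))) 0 hz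
  have hscale : ∀ s ∈ Ioi (0 : ℝ),
      (z * s) ^ (ν - 1) * exp (-(z * s / 2) - z ^ 2 / (2 * (z * s)))
        = z ^ (ν - 1) * (s ^ (ν - 1) * exp (-(z / 2) * (s + 1 / s))) := by
    intro s hs
    have hs : 0 < s := hs
    rw [mul_rpow hz.le hs.le, mul_assoc]
    congr 3
    field_simp
    ring
  rw [setIntegral_congr_fun measurableSet_Ioi hscale, integral_const_mul, mul_zero,
    rpow_sub_one hz.ne', smul_eq_mul] at hsubst
  rw [besselK, matern, ← hsubst]
  field_simp

theorem integrableOn_rpow_mul_exp_neg_sub_div (s : ℝ) {a b : ℝ} (ha : 0 < a) (hb : 0 < b) :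
    IntegrableOn (fun r : ℝ ↦ r ^ s * exp (-(a * r) - b / r)) (Ioi 0) := by
  obtain ⟨n, hn⟩ := exists_nat_gt (-1 - s)
  have hbound := (integrableOn_rpow_mul_exp_neg_mul_rpow (s := s + n) (by linarith) one_pos
    ha).const_mul (n.factorial / b ^ n)
  refine hbound.mono' (by fun_prop) ?_
  filter_upwards [ae_restrict_mem measurableSet_Ioi] with r hr
  have hr : 0 < r := hr
  have hexp : exp (-(b / r)) ≤ n.factorial / (b / r) ^ n := by
    rw [exp_neg, ← inv_div ((b / r) ^ n)]
    exact inv_anti₀ (by positivity) (pow_div_factorial_le_exp _ (by positivity) n)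
  rw [norm_of_nonneg (by positivity), rpow_one, sub_eq_add_neg, exp_add, ← neg_mul]
  calc r ^ s * (exp (-a * r) * exp (-(b / r)))
      ≤ r ^ s * (exp (-a * r) * (n.factorial / (b / r) ^ n)) := by gcongr
    _ = n.factorial / b ^ n * (r ^ (s + n) * exp (-a * r)) := by
        rw [rpow_add hr, rpow_natCast, div_pow]
        field_simp

theorem continuousAt_matern (ν : ℝ) {z : ℝ} (hz : z ≠ 0) : ContinuousAt (matern ν) z := by
  have hnear : ∀ᶠ y in 𝓝 z, z ^ 2 / 2 < y ^ 2 :=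
    (continuous_pow 2).continuousAt.eventually (lt_mem_nhds (half_lt_self (by positivity)))
  refine continuousAt_const.mul (continuousAt_of_dominated
    (Eventually.of_forall fun y ↦ by fun_prop) ?_
    (integrableOn_rpow_mul_exp_neg_sub_div (ν - 1) one_half_pos
      (by positivity : 0 < z ^ 2 / 4))
    (Eventually.of_forall fun r ↦ by fun_prop))
  filter_upwards [hnear] with y hy
  filter_upwards [ae_restrict_mem measurableSet_Ioi] with r hr
  have hr : 0 < r := hr
  rw [norm_of_nonneg (by positivity)]
  have hdiv : z ^ 2 / 4 / r ≤ y ^ 2 / (2 * r) := by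
    rw [div_le_div_iff₀ hr (by positivity)]
    nlinarith
  gcongr
  linarith

theorem integrable_matern {ν : ℝ} (hν : -1 / 2 < ν) : Integrable (matern ν) := by
  have hsplit (r z : ℝ) : r ^ (ν - 1) * exp (-(r / 2) - z ^ 2 / (2 * r))
      = r ^ (ν - 1) * exp (-(r / 2)) * exp (-(1 / (2 * r)) * z ^ 2) := by
    rw [mul_assoc, ← exp_add]
    ring_nf
  have hgauss {r : ℝ} (hr : 0 < r) : ∫ z, r ^ (ν - 1) * exp (-(r / 2) - z ^ 2 / (2 * r))
      = √(2 * π) * (r ^ (ν - 1 / 2) * exp (-(1 / 2) * r ^ (1 : ℝ))) := by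
    simp_rw [hsplit]
    rw [integral_const_mul, integral_gaussian, div_div_eq_mul_div, div_one, ← mul_assoc,
      mul_comm π, sqrt_mul (by positivity), sqrt_eq_rpow r, rpow_one,
      show ν - 1 / 2 = ν - 1 + 1 / 2 by ring, rpow_add hr]
    ring_nf
  have hprod : Integrable (fun p : ℝ × ℝ ↦ p.1 ^ (ν - 1) * exp (-(p.1 / 2) - p.2 ^ 2 / (2 * p.1)))
      ((volume.restrict (Ioi 0)).prod volume) := by
    refine (integrable_prod_iff (by fun_prop)).2 ⟨?_, ?_⟩
    · filter_upwards [ae_restrict_mem measurableSet_Ioi] with r hr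
      have hr : 0 < r := hr
      simp_rw [hsplit]
      exact (integrable_exp_neg_mul_sq (by positivity)).const_mul _
    · refine ((integrableOn_rpow_mul_exp_neg_mul_rpow (s := ν - 1 / 2) (by linarith)
        one_pos one_half_pos).const_mul √(2 * π)).congr ?_
      filter_upwards [ae_restrict_mem measurableSet_Ioi] with r hr
      have hr : 0 < r := hr
      rw [← hgauss hr]
      exact integral_congr_ae (Eventually.of_forall fun z ↦ (norm_of_nonneg (by positivity)).symm)
  exact hprod.integral_prod_right.const_mul _

end Matern

section SpectralDensity

variable {k w x : ℝ}

theorem specDen_eq_matern (k : ℝ) (hx : x ≠ w) (hx' : x ≠ -w) :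
    specDen k w x = c1 k / 2 * (matern ((k - 1) / 2) (x + w) + matern ((k - 1) / 2) (x - w)) := by
  rw [specDen, besselK_mul_rpow _ (abs_pos.2 (add_eq_zero_iff_eq_neg.not.2 hx')),
    besselK_mul_rpow _ (abs_pos.2 (sub_ne_zero.2 hx)), matern_abs, matern_abs]

theorem integrable_specDen (hk : 0 < k) (w : ℝ) : Integrable (specDen k w) := by
  have hM : Integrable (matern ((k - 1) / 2)) := integrable_matern (by linarith)
  refine (((hM.comp_add_right w).add (hM.comp_sub_right w)).const_mul (c1 k / 2)).congr ?_
  filter_upwards [Measure.ae_ne volume w, Measure.ae_ne volume (-w)] with x hx hx'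
  exact (specDen_eq_matern k hx hx').symm

theorem continuousAt_specDen (k : ℝ) (hx : x ≠ w) (hx' : x ≠ -w) :
    ContinuousAt (specDen k w) x := by
  have hadd : ContinuousAt (fun y ↦ matern ((k - 1) / 2) (y + w)) x :=
    (continuousAt_matern _ (add_eq_zero_iff_eq_neg.not.2 hx')).comp
      (f := fun y ↦ y + w) (by fun_prop)
  have hsub : ContinuousAt (fun y ↦ matern ((k - 1) / 2) (y - w)) x :=
    (continuousAt_matern _ (sub_ne_zero.2 hx)).comp (f := fun y ↦ y - w) (by fun_prop)
  refine ((hadd.add hsub).const_mul (c1 k / 2)).congr ?_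
  filter_upwards [isOpen_ne.mem_nhds hx, isOpen_ne.mem_nhds hx'] with y hy hy'
  exact (specDen_eq_matern k hy hy').symm

end SpectralDensity

section Scaling

variable {V F ι : Type*} [NormedAddCommGroup V] [NormedSpace ℝ V] [FiniteDimensional ℝ V]
  [MeasurableSpace V] [BorelSpace V] {μ : Measure V} [μ.IsAddHaarMeasure]
  [NormedAddCommGroup F]
  {l : Filter ι} {g : V → ℝ} {f : V → F}

theorem tendsto_integral_smul_comp_smul [NormedSpace ℝ F] [CompleteSpace F]
    (hg₀ : ∀ x, 0 ≤ g x) (hg : Integrable g μ)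
    (hg_decay : Tendsto (fun x ↦ ‖x‖ ^ finrank ℝ V * g x) (cobounded V) (𝓝 0))
    (hf : Integrable f μ) (hf₀ : ContinuousAt f 0) :
    Tendsto (fun d : ℝ ↦ ∫ x, g x • f (d • x) ∂μ) (𝓝[>] 0) (𝓝 ((∫ x, g x ∂μ) • f 0)) := by
  rcases eq_or_ne (∫ x, g x ∂μ) 0 with hI | hI
  · have hg_zero : g =ᵐ[μ] 0 := (integral_eq_zero_iff_of_nonneg hg₀ hg).1 hI
    have hint_zero (d : ℝ) : ∫ x, g x • f (d • x) ∂μ = 0 := by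
      refine integral_eq_zero_of_ae ?_
      filter_upwards [hg_zero] with x hx
      simp [hx]
    simp [hint_zero, hI]
  set I := ∫ x, g x ∂μ
  have hpeak := (tendsto_integral_comp_smul_smul_of_integrable (φ := fun x ↦ I⁻¹ * g x)
    (fun x ↦ mul_nonneg (inv_nonneg.2 (integral_nonneg hg₀)) (hg₀ x))
    (by rw [integral_const_mul, inv_mul_cancel₀ hI])
    (by simpa [mul_left_comm] using hg_decay.const_mul I⁻¹) hf hf₀).comp tendsto_inv_nhdsGT_zero
  refine (hpeak.const_smul I).congr' ?_
  filter_upwards [self_mem_nhdsWithin] with d hd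
  have hd : 0 < d := hd
  have hsubst := Measure.integral_comp_smul μ (fun x ↦ g x • f (d • x)) d⁻¹
  rw [inv_pow, inv_inv, abs_of_pos (by positivity)] at hsubst
  rw [Function.comp_apply, ← integral_smul]
  simp only [smul_inv_smul₀ hd.ne'] at hsubst
  rw [← inv_smul_eq_iff₀ (by positivity), ← integral_smul] at hsubst
  rw [← hsubst]
  refine integral_congr_ae (Eventually.of_forall fun x ↦ ?_)
  simp only [smul_smul, inv_pow]
  congr 1
  field_simp

theorem tendsto_integral_mul_norm_comp_smul_sub (hg₀ : ∀ x, 0 ≤ g x) (hg : Integrable g μ)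
    {C : ℝ} (hgC : ∀ x, g x ≤ C)
    (hg_decay : Tendsto (fun x ↦ ‖x‖ ^ finrank ℝ V * g x) (cobounded V) (𝓝 0))
    (hf : Integrable f μ) (hf₀ : ContinuousAt f 0) :
    Tendsto (fun d : ℝ ↦ ∫ x, g x * ‖f (d • x) - f 0‖ ∂μ) (𝓝[>] 0) (𝓝 0) := by
  -- Subtracting the constant `‖f 0‖` makes `‖f - f 0‖` integrable.
  set h : V → ℝ := fun y ↦ ‖f y - f 0‖ - ‖f 0‖ with hh
  have hh_int : Integrable h μ := by
    refine hf.norm.mono'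
      ((hf.aestronglyMeasurable.sub aestronglyMeasurable_const).norm.sub
        aestronglyMeasurable_const) (Eventually.of_forall fun y ↦ ?_)
    simpa [hh] using abs_norm_sub_norm_le (f y - f 0) (-f 0)
  have hh_cont : ContinuousAt h 0 := (hf₀.sub continuousAt_const).norm.sub continuousAt_const
  have hlim := (tendsto_integral_smul_comp_smul hg₀ hg hg_decay hh_int hh_cont).add_const
    ((∫ x, g x ∂μ) * ‖f 0‖)
  have hzero : (∫ x, g x ∂μ) • h 0 + (∫ x, g x ∂μ) * ‖f 0‖ = 0 := by simp [hh]
  rw [hzero] at hlim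
  refine hlim.congr' ?_
  filter_upwards [self_mem_nhdsWithin] with d hd
  have hgh : Integrable (fun x ↦ g x • h (d • x)) μ :=
    (hh_int.comp_smul (ne_of_gt hd)).bdd_mul hg.aestronglyMeasurable
      (Eventually.of_forall fun x ↦ (norm_of_nonneg (hg₀ x)).trans_le (hgC x))
  rw [← integral_mul_const, ← integral_add hgh (hg.mul_const _)]
  simp [hh, mul_sub]

theorem integrable_smul_comp_smul_sub [NormedSpace ℝ F] (hg : Integrable g μ) {C : ℝ}
    (hgC : ∀ x, ‖g x‖ ≤ C) (hf : Integrable f μ) {d : ℝ} (hd : d ≠ 0) (c : F) :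
    Integrable (fun x ↦ g x • (f (d • x) - c)) μ := by
  simp_rw [smul_sub]
  exact ((hf.comp_smul hd).bdd_smul C hg.aestronglyMeasurable (Eventually.of_forall hgC)).sub
    (hg.smul_const c)

theorem tendsto_integral_smul_comp_smul_of_dominated [NormedSpace ℝ F] [CompleteSpace F]
    [l.IsCountablyGenerated] (hg₀ : ∀ x, 0 ≤ g x) (hg : Integrable g μ) {C : ℝ}
    (hgC : ∀ x, g x ≤ C)
    (hg_decay : Tendsto (fun x ↦ ‖x‖ ^ finrank ℝ V * g x) (cobounded V) (𝓝 0))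
    (hf : Integrable f μ) (hf₀ : ContinuousAt f 0)
    {G : ι → V → ℝ} {φ : V → ℝ} (hG : ∀ᶠ i in l, AEStronglyMeasurable (G i) μ)
    (hGg : ∀ᶠ i in l, ∀ x, ‖G i x‖ ≤ g x)
    (hGφ : ∀ᵐ x ∂μ, Tendsto (fun i ↦ G i x) l (𝓝 (φ x)))
    {d : ι → ℝ} (hd : Tendsto d l (𝓝[>] 0)) :
    Tendsto (fun i ↦ ∫ x, G i x • f (d i • x) ∂μ) l (𝓝 ((∫ x, φ x ∂μ) • f 0)) := by
  have hmain : Tendsto (fun i ↦ (∫ x, G i x ∂μ) • f 0) l (𝓝 ((∫ x, φ x ∂μ) • f 0)) :=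
    (tendsto_integral_filter_of_dominated_convergence g hG
      (hGg.mono fun _ h ↦ Eventually.of_forall h) hg hGφ).smul_const _
  have herror : Tendsto (fun i ↦ ∫ x, G i x • (f (d i • x) - f 0) ∂μ) l (𝓝 0) := by
    refine squeeze_zero_norm' ?_
      ((tendsto_integral_mul_norm_comp_smul_sub hg₀ hg hgC hg_decay hf hf₀).comp hd)
    filter_upwards [hGg, hd.eventually self_mem_nhdsWithin] with i hi hdi
    have hdom := integrable_smul_comp_smul_sub hg
      (fun x ↦ (norm_of_nonneg (hg₀ x)).trans_le (hgC x)) hf (ne_of_gt hdi) (f 0)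
    refine norm_integral_le_of_norm_le (hdom.norm.congr (Eventually.of_forall fun x ↦ ?_))
      (Eventually.of_forall fun x ↦ ?_)
    · simp only [norm_smul, norm_of_nonneg (hg₀ x)]
    · rw [norm_smul]
      exact mul_le_mul_of_nonneg_right (hi x) (norm_nonneg _)
  refine (add_zero ((∫ x, φ x ∂μ) • f 0) ▸ hmain.add herror).congr' ?_
  filter_upwards [hG, hGg, hd.eventually self_mem_nhdsWithin] with i hGi hi hdi
  have hGi_int : Integrable (G i) μ := hg.mono' hGi (Eventually.of_forall hi)
  rw [← integral_smul_const, ← integral_add (hGi_int.smul_const _)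
    (integrable_smul_comp_smul_sub hGi_int (fun x ↦ (hi x).trans (hgC x)) hf (ne_of_gt hdi) _)]
  simp only [smul_sub, add_sub_cancel]

end Scaling

section PowerDecay

theorem one_div_one_add_mul_rpow_le {c α x : ℝ} (hc : 0 < c) (hα : 0 ≤ α) (hx : 0 ≤ x) :
    1 / (1 + c * x ^ α) ≤ 2 ^ α / min 1 c * (1 + x) ^ (-α) := by
  have hmin : 0 < min 1 c := lt_min one_pos hc
  have hpow : (1 + x) ^ α ≤ 2 ^ α * (1 + x ^ α) := by
    calc (1 + x) ^ α ≤ (2 * max 1 x) ^ α := by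
          gcongr
          linarith [le_max_left 1 x, le_max_right 1 x]
      _ = 2 ^ α * max 1 x ^ α := mul_rpow zero_le_two (by positivity)
      _ ≤ 2 ^ α * (1 + x ^ α) := by
          gcongr
          rcases max_cases 1 x with ⟨h, -⟩ | ⟨h, -⟩ <;> rw [h]
          · simpa using rpow_nonneg hx α
          · linarith
  have hlinear : min 1 c * (1 + x ^ α) ≤ 1 + c * x ^ α := by
    rw [mul_add, mul_one]
    gcongr
    exacts [min_le_left 1 c, min_le_right 1 c]
  rw [rpow_neg (by positivity), ← div_eq_mul_inv, div_div,
    div_le_div_iff₀ (by positivity) (by positivity)]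
  calc 1 * (min 1 c * (1 + x) ^ α) ≤ min 1 c * (2 ^ α * (1 + x ^ α)) := by
        rw [one_mul]
        gcongr
    _ = 2 ^ α * (min 1 c * (1 + x ^ α)) := by ring
    _ ≤ 2 ^ α * (1 + c * x ^ α) := by gcongr

variable {V : Type*} [NormedAddCommGroup V]

theorem tendsto_norm_pow_mul_one_div_one_add_mul_norm_rpow {c α : ℝ} (hc : 0 < c) {n : ℕ}
    (hα : n < α) :
    Tendsto (fun x : V ↦ ‖x‖ ^ n * (1 / (1 + c * ‖x‖ ^ α))) (cobounded V) (𝓝 0) := by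
  have hpow : Tendsto (fun x : V ↦ c⁻¹ * ‖x‖ ^ (-(α - n))) (cobounded V) (𝓝 0) := by
    simpa using ((tendsto_rpow_neg_atTop (sub_pos.2 hα)).comp
      tendsto_norm_cobounded_atTop).const_mul c⁻¹
  refine squeeze_zero' (Eventually.of_forall fun x ↦ by positivity) ?_ hpow
  filter_upwards [tendsto_norm_cobounded_atTop.eventually_gt_atTop 0] with x hx
  calc ‖x‖ ^ n * (1 / (1 + c * ‖x‖ ^ α)) ≤ ‖x‖ ^ n * (1 / (c * ‖x‖ ^ α)) := by
        gcongr
        linarith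
    _ = c⁻¹ * ‖x‖ ^ (-(α - n)) := by
        rw [neg_sub, rpow_sub hx, rpow_natCast]
        field_simp

variable [NormedSpace ℝ V] [FiniteDimensional ℝ V] [MeasurableSpace V] [BorelSpace V]

theorem integrable_one_div_one_add_mul_norm_rpow (μ : Measure V) [μ.IsAddHaarMeasure] {c α : ℝ}
    (hc : 0 < c) (hα : finrank ℝ V < α) : Integrable (fun x : V ↦ 1 / (1 + c * ‖x‖ ^ α)) μ := by
  refine ((integrable_one_add_norm hα).const_mul (2 ^ α / min 1 c)).mono'
    (Measurable.aestronglyMeasurable (by fun_prop)) (Eventually.of_forall fun x ↦ ?_)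
  rw [norm_of_nonneg (by positivity)]
  exact one_div_one_add_mul_rpow_le hc (by linarith [(finrank ℝ V).cast_nonneg (α := ℝ)])
    (norm_nonneg x)

end PowerDecay

theorem sq_div_le_of_antitone {R : Type*} [Preorder R] {E : R → ℝ} (hE : Antitone E)
    (hE₀ : ∀ u, 0 < E u) {u v : R} (huv : u ≤ v) :
    E v ^ 2 / E u ≤ E u := by
  rw [div_le_iff₀ (hE₀ u), ← sq]
  exact pow_le_pow_left₀ (hE₀ v).le (hE huv) 2

theorem ae_continuousAt_comp_of_antitone {R X : Type*} [LinearOrder R] [TopologicalSpace R]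
    [OrderTopology R] [SecondCountableTopology R] [MeasurableSpace X] {μ : Measure X}
    {E : R → ℝ} (hE : Antitone E) {a : X → R} (ha : ∀ u, μ (a ⁻¹' {u}) = 0) :
    ∀ᵐ x ∂μ, ContinuousAt E (a x) :=
  (measure_preimage_eq_zero_iff_of_countable hE.countable_not_continuousAt).2 fun u _ ↦ ha u

section RieszBessel

variable {V : Type*} [NormedAddCommGroup V]

/-- The symbol `c |x|^α (1 + δ|x|²)^(γ/2)` of the Riesz–Bessel operator
`c (-Δ)^(α/2) (1 - δΔ)^(γ/2)`; for `δ = 0` it is that of the fractional Laplacian.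
It takes values in `ℝ≥0`, where `u ↦ E_β(-u)` is monotone. -/
noncomputable def rieszBesselSymbol (c α γ δ : ℝ) (x : V) : ℝ≥0 :=
  (c * ‖x‖ ^ α * (1 + δ * ‖x‖ ^ 2) ^ (γ / 2)).toNNReal

variable {c α γ δ : ℝ}

theorem coe_rieszBesselSymbol (α γ : ℝ) (hc : 0 ≤ c) (hδ : 0 ≤ δ) (x : V) :
    (rieszBesselSymbol c α γ δ x : ℝ) = c * ‖x‖ ^ α * (1 + δ * ‖x‖ ^ 2) ^ (γ / 2) :=
  coe_toNNReal _ (by positivity)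

theorem rieszBesselSymbol_zero_le (α : ℝ) (hc : 0 ≤ c) (hγ : 0 ≤ γ) (hδ : 0 ≤ δ) (x : V) :
    rieszBesselSymbol c α γ 0 x ≤ rieszBesselSymbol c α γ δ x := by
  refine toNNReal_le_toNNReal ?_
  gcongr

theorem continuousAt_rieszBesselSymbol (c α γ : ℝ) (x : V) :
    ContinuousAt (fun δ ↦ rieszBesselSymbol c α γ δ x) 0 := by
  refine continuous_real_toNNReal.continuousAt.comp (continuousAt_const.mul ?_)
  exact ContinuousAt.rpow_const (by fun_prop) (by simp)

variable [MeasurableSpace V] [BorelSpace V]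

theorem measurable_rieszBesselSymbol (c α γ δ : ℝ) :
    Measurable (rieszBesselSymbol c α γ δ : V → ℝ≥0) := by
  unfold rieszBesselSymbol
  fun_prop

variable [NormedSpace ℝ V] [FiniteDimensional ℝ V] {μ : Measure V} [μ.IsAddHaarMeasure]

theorem measure_preimage_rieszBesselSymbol_zero [Nontrivial V] (γ : ℝ) (hc : 0 < c) (hα : α ≠ 0)
    (u : ℝ≥0) : μ (rieszBesselSymbol c α γ 0 ⁻¹' {u}) = 0 := by
  refine measure_mono_null (fun x hx ↦ ?_) (μ.addHaar_sphere 0 ((u / c) ^ α⁻¹))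
  have hx : c * ‖x‖ ^ α = u := by
    rw [← eq_of_mem_singleton hx, coe_rieszBesselSymbol α γ hc.le le_rfl]
    simp
  rw [mem_sphere_zero_iff_norm, ← hx, mul_div_cancel_left₀ _ hc.ne',
    rpow_rpow_inv (norm_nonneg x) hα]

theorem tendsto_integral_sq_div_rieszBesselSymbol [Nontrivial V] {F ι : Type*}
    [NormedAddCommGroup F] [NormedSpace ℝ F] [CompleteSpace F] {l : Filter ι}
    [l.IsCountablyGenerated] (hc : 0 < c) (hα : finrank ℝ V < α) (hγ : 0 ≤ γ)
    {E : ℝ≥0 → ℝ} (hE : Antitone E) (hE₀ : ∀ u, 0 < E u) {C : ℝ} (hC : 0 < C)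
    (hE_decay : ∀ u, E u ≤ 1 / (1 + C * u))
    {f : V → F} (hf : Integrable f μ) (hf₀ : ContinuousAt f 0)
    {δ d : ι → ℝ} (hδ : Tendsto δ l (𝓝[≥] 0)) (hd : Tendsto d l (𝓝[>] 0)) :
    Tendsto (fun i ↦ ∫ x, (E (rieszBesselSymbol c α γ (δ i) x) ^ 2
        / E (rieszBesselSymbol c α γ 0 x)) • f (d i • x) ∂μ) l
      (𝓝 ((∫ x, E (rieszBesselSymbol c α γ 0 x) ∂μ) • f 0)) := by
  have hα₀ : 0 < α := (Nat.cast_nonneg _).trans_lt hα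
  have hCc : 0 < C * c := mul_pos hC hc
  have hE_symbol (x : V) : E (rieszBesselSymbol c α γ 0 x) ≤ 1 / (1 + C * c * ‖x‖ ^ α) := by
    refine (hE_decay _).trans_eq ?_
    rw [coe_rieszBesselSymbol α γ hc.le le_rfl]
    simp [mul_assoc]
  refine tendsto_integral_smul_comp_smul_of_dominated
    (g := fun x ↦ 1 / (1 + C * c * ‖x‖ ^ α)) (C := 1) (fun x ↦ by positivity)
    (integrable_one_div_one_add_mul_norm_rpow μ hCc hα)
    (fun x ↦ div_le_one_of_le₀ (le_add_of_nonneg_right (by positivity)) (by positivity))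
    (tendsto_norm_pow_mul_one_div_one_add_mul_norm_rpow hCc hα) hf hf₀ ?_ ?_ ?_ hd
  · have hmeas (δ : ℝ) : Measurable fun x : V ↦ E (rieszBesselSymbol c α γ δ x) :=
      hE.measurable.comp (measurable_rieszBesselSymbol c α γ δ)
    exact Eventually.of_forall fun i ↦
      (((hmeas (δ i)).pow_const 2).div (hmeas 0)).aestronglyMeasurable
  · filter_upwards [hδ.eventually self_mem_nhdsWithin] with i hδi x
    rw [norm_of_nonneg (div_nonneg (sq_nonneg _) (hE₀ _).le)]
    exact (sq_div_le_of_antitone hE hE₀ (rieszBesselSymbol_zero_le α hc.le hγ hδi x)).trans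
      (hE_symbol x)
  · filter_upwards [ae_continuousAt_comp_of_antitone hE
      (measure_preimage_rieszBesselSymbol_zero (μ := μ) γ hc hα₀.ne')] with x hx
    have hsymbol := (continuousAt_rieszBesselSymbol c α γ x).tendsto.comp
      (tendsto_nhds_of_tendsto_nhdsWithin hδ)
    have hlim := ((hx.tendsto.comp hsymbol).pow 2).div_const (E (rieszBesselSymbol c α γ 0 x))
    rwa [sq, mul_div_cancel_left₀ _ (hE₀ _).ne'] at hlim

end RieszBessel

theorem tendsto_rpow_nhdsGT_zero {p : ℝ} (hp : 0 < p) :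
    Tendsto (fun ε : ℝ ↦ ε ^ p) (𝓝[>] 0) (𝓝[>] 0) := by
  refine tendsto_nhdsWithin_iff.2
    ⟨?_, eventually_mem_nhdsWithin.mono fun ε hε ↦ rpow_pos_of_pos hε p⟩
  simpa [zero_rpow hp.ne'] using
    (continuousAt_rpow_const 0 p (Or.inr hp.le)).tendsto.mono_left nhdsWithin_le_nhds

theorem frbe_dominated_convergence_general (k w b α γ μ t : ℝ)
    (hk : 0 < k) (hw : w ≠ 0) (hb : 0 < b) (hα : 1 < α) (hγ : 0 ≤ γ) (hμ : 0 < μ) (ht : 0 < t)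
    (hpos : ∀ u : ℝ, 0 ≤ u → 0 < mittagLeffler b (-u))
    (hupp : ∀ u : ℝ, 0 ≤ u → mittagLeffler b (-u) ≤ 1 / (1 + u / Real.Gamma (1 + b)))
    (hmono : ∀ u v : ℝ, 0 ≤ u → u ≤ v → mittagLeffler b (-v) ≤ mittagLeffler b (-u)) :
    Tendsto
      (fun ε : ℝ ↦ ∫ lam : ℝ,
        (mittagLeffler b (-(μ * |lam| ^ α * (1 + lam ^ 2 * ε ^ (2 * b / α)) ^ (γ / 2) * t ^ b))) ^ 2
          / mittagLeffler b (-(μ * t ^ b * |lam| ^ α))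
          * specDen k w (lam * ε ^ (b / α)))
      (𝓝[>] 0)
      (𝓝 (specDen k w 0 * ∫ lam : ℝ, mittagLeffler b (-(μ * t ^ b * |lam| ^ α)))) := by
  have hα₀ : 0 < α := one_pos.trans hα
  have hc : 0 < μ * t ^ b := by positivity
  have hlim := tendsto_integral_sq_div_rieszBesselSymbol (V := ℝ) (γ := γ) hc (by simpa using hα) hγ
    (E := fun u ↦ mittagLeffler b (-u)) (fun u v huv ↦ hmono u v u.2 huv) (fun u ↦ hpos u u.2)
    (inv_pos.2 (Gamma_pos_of_pos (by positivity : 0 < 1 + b)))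
    (fun u ↦ (hupp u u.2).trans_eq (by rw [div_eq_inv_mul (u : ℝ)]))
    (integrable_specDen hk w) (continuousAt_specDen k hw.symm (neg_ne_zero.2 hw).symm)
    ((tendsto_rpow_nhdsGT_zero (by positivity : 0 < 2 * b / α)).mono_right
      (nhdsWithin_mono 0 Ioi_subset_Ici_self))
    (tendsto_rpow_nhdsGT_zero (by positivity : 0 < b / α))
  simp only [coe_rieszBesselSymbol α γ hc.le le_rfl, zero_mul, add_zero, one_rpow, mul_one,
    Real.norm_eq_abs, smul_eq_mul, mul_comm _ (specDen k w 0)] at hlim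
  refine hlim.congr' ?_
  filter_upwards [self_mem_nhdsWithin] with ε hε
  refine integral_congr_ae (Eventually.of_forall fun x ↦ ?_)
  simp only [coe_rieszBesselSymbol α γ hc.le (rpow_nonneg (le_of_lt hε) _), Real.norm_eq_abs,
    sq_abs]
  ring_nf

theorem frbe_dominated_convergence (k w b α γ μ t : ℝ)
    (hk0 : 0 < k) (hk1 : k < 1) (hw : w ≠ 0)
    (hb0 : 0 < b) (hb1 : b < 1) (hα : 1 < α) (hγ : 0 ≤ γ) (hμ : 0 < μ) (ht : 0 < t)
    (hlow : ∀ u : ℝ, 0 ≤ u → 1 / (1 + Real.Gamma (1-b) * u) ≤ mittagLeffler b (-u))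
    (hupp : ∀ u : ℝ, 0 ≤ u → mittagLeffler b (-u) ≤ 1 / (1 + u / Real.Gamma (1+b)))
    (hmono : ∀ u v : ℝ, 0 ≤ u → u ≤ v → mittagLeffler b (-v) ≤ mittagLeffler b (-u))
    : Filter.Tendsto
      (fun ε : ℝ => ∫ lam : ℝ,
        (mittagLeffler b (-(μ * |lam| ^ α * (1 + lam^2 * ε ^ (2*b/α)) ^ (γ/2) * t ^ b)))^2
          / mittagLeffler b (-(μ * t ^ b * |lam| ^ α))
          * specDen k w (lam * ε ^ (b/α)))
      (nhdsWithin 0 (Set.Ioi 0))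
      (nhds (specDen k w 0 * ∫ lam : ℝ, mittagLeffler b (-(μ * t ^ b * |lam| ^ α)))) := by
  refine frbe_dominated_convergence_general k w b α γ μ t hk0 hw hb0 hα hγ hμ ht
    (fun u hu ↦ lt_of_lt_of_le ?_ (hlow u hu)) hupp hmono
  have hΓ : 0 < Real.Gamma (1 - b) := Gamma_pos_of_pos (sub_pos.2 hb1)
  positivity
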